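/- Matching-pair block lemma for the reverse pass: Let w ∈ Σ^N with Σ = {ins(a), ext(a) : a ∈ {0,…,U}} have no duplicates (each value inserted at most once and extracted at most once). Process w from right to left. Call a position t < N a valley if w[t] = ext(a) for some a and w[t+1] is an insertion; also position N is the start of block 1 if w[N] is an extraction. Blocks are indexed by counting valleys from the right: block 0 is initial with minimum m₀ = −∞, and the j-th valley from the right, at which ext(m_j) occurs, opens block j with minimum m_j. Suppose w has positions s < t_a with w[s] = ins(a) and w[t_a] = ext(a), and suppose that for every position t with s ≤ t < N such that w[t] = ext(c) and w[t+1] = ext(b) one has c ≥ b (i.e., no ordering check fails while processing positions N down to s). Let k be the block index of ext(a) (the number of valleys among positions ≥ t_a), let i be the number of valleys among positions > s, and let k' = max{ j ≤ i : m_j ≤ a } (the block index assigned to ins(a)). Then k = k' if and only if every extraction ext(b) occurring at a position strictly between s and t_a satisfies b > a. -/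

import Mathlib

/-!
Along a maximal run of consecutive extractions the ordering check makes values weakly decrease
from left to right, and the run ends at the valley opening its block. Hence (`exists_run`) the
block of an extraction `ext(c)` has minimum at most `c`. In particular `m k ≤ a`, and `k ≤ i`,
so `k ≤ k'` always holds.

If every extraction strictly between `s` and `ta` exceeds `a` and still `k < k'`, then block `k'`
is opened by a valley strictly between `s` and `ta` (`exists_valley_of_count`), whose value both
exceeds `a` and equals `m k' ≤ a`, which is absurd.

Conversely let `k = k'` and let `ext(b)` with `b ≤ a` occur at `t`, `s < t < ta`. Its block has
minimum at most `b ≤ a`, so its index is at most `k' = k`; being left of `ta` it is also at least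
`k`. So no valley separates `t` from `ta`, both lie in the same run, and `a ≤ b`; then `a = b`
contradicts the absence of duplicates.
-/

/-- A letter of the alphabet `Σ = {ins(a), ext(a)}`. -/
inductive Letter where
  | ins : ℕ → Letter
  | ext : ℕ → Letter
deriving DecidableEq

/-- The value carried by a letter. -/
def Letter.value : Letter → ℕ
  | .ins a => a
  | .ext a => a

/-- Whether a letter is an extraction. -/
def Letter.isExt : Letter → Bool
  | .ins _ => false
  | .ext _ => true

/-- Whether a letter is an insertion. -/
def Letter.isIns : Letter → Bool
  | .ins _ => true
  | .ext _ => false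

/-- `t` is a valley (for the right-to-left pass on `w[1..N]`): `w t` is an extraction and
either `t = N` or `w (t+1)` is an insertion. -/
def isValleyB (w : ℕ → Letter) (N t : ℕ) : Bool :=
  (w t).isExt && (decide (t = N) || (w (t + 1)).isIns)

/-- The number of valleys among positions in `[t, N]`, i.e. the block index, counting
from the right, of a position `t`. -/
def valleyCountGe (w : ℕ → Letter) (N t : ℕ) : ℕ :=
  ((Finset.Icc t N).filter fun v => isValleyB w N v = true).card

theorem valleyCountGe_succ (w : ℕ → Letter) (N t : ℕ) (ht : t ≤ N) :
    valleyCountGe w N t = valleyCountGe w N (t + 1) + if isValleyB w N t = true then 1 else 0 := by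
  unfold valleyCountGe
  rw [← Finset.insert_Icc_add_one_left_eq_Icc ht, Finset.filter_insert]
  split_ifs with h
  · rw [Finset.card_insert_of_notMem (by simp)]
  · rfl

theorem valleyCountGe_anti (w : ℕ → Letter) (N : ℕ) {t u : ℕ} (h : t ≤ u) :
    valleyCountGe w N u ≤ valleyCountGe w N t :=
  Finset.card_le_card (Finset.filter_subset_filter _ (Finset.Icc_subset_Icc_left h))

/-- The run of consecutive extractions starting at an extraction `ext(c)` ends at the valley `v`
opening the block of that extraction, and all values along the run are at most `c`. -/
theorem exists_run (w : ℕ → Letter) (N s : ℕ)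
    (hcheck : ∀ t c b, s ≤ t → t < N → w t = .ext c → w (t + 1) = .ext b → b ≤ c)
    (n : ℕ) : ∀ t c, N - t = n → s ≤ t → t ≤ N → w t = .ext c →
      ∃ v, t ≤ v ∧ v ≤ N ∧ isValleyB w N v = true ∧ valleyCountGe w N v = valleyCountGe w N t ∧
        ∀ u, t ≤ u → u ≤ v → (w u).value ≤ c := by
  induction n with
  | zero =>
    intro t c hn _ htN hw
    refine ⟨t, le_rfl, htN, ?_, rfl, fun u h1 h2 => ?_⟩
    · obtain rfl : t = N := by omega
      simp [isValleyB, hw, Letter.isExt]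
    · rw [le_antisymm h2 h1, hw]; simp [Letter.value]
  | succ n ih =>
    intro t c hn hst htN hw
    cases hw' : w (t + 1) with
    | ins b =>
      refine ⟨t, le_rfl, htN, ?_, rfl, fun u h1 h2 => ?_⟩
      · simp [isValleyB, hw, hw', Letter.isExt, Letter.isIns]
      · rw [le_antisymm h2 h1, hw]; simp [Letter.value]
    | ext b =>
      have hbc := hcheck t c b hst (by omega) hw hw'
      obtain ⟨v, h1, h2, h3, h4, h5⟩ := ih (t + 1) b (by omega) (by omega) (by omega) hw'
      have hnv : ¬ isValleyB w N t = true := by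
        simp [isValleyB, hw, hw', Letter.isExt, Letter.isIns, show t ≠ N by omega]
      refine ⟨v, by omega, h2, h3, ?_, fun u hu1 hu2 => ?_⟩
      · rw [valleyCountGe_succ w N t htN, if_neg hnv, Nat.add_zero, h4]
      · rcases hu1.eq_or_lt with rfl | hlt
        · rw [hw]; simp [Letter.value]
        · exact (h5 u hlt hu2).trans hbc

/-- Block indices grow by at most one per step to the left, so each index between those of two
positions is attained at a valley between them. -/
theorem exists_valley_of_count (w : ℕ → Letter) (N ta j : ℕ) (hta : ta ≤ N)
    (hj : valleyCountGe w N ta < j) (d : ℕ) : ∀ t, t + d = ta → j ≤ valleyCountGe w N t →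
      ∃ v, t ≤ v ∧ v < ta ∧ isValleyB w N v = true ∧ valleyCountGe w N v = j := by
  induction d with
  | zero =>
    intro t ht hjt
    rw [Nat.add_zero] at ht
    subst ht
    omega
  | succ d ih =>
    intro t ht hjt
    by_cases h : j ≤ valleyCountGe w N (t + 1)
    · obtain ⟨v, h1, h2⟩ := ih (t + 1) (by omega) h
      exact ⟨v, by omega, h2⟩
    · have hs := valleyCountGe_succ w N t (by omega)
      split_ifs at hs with hv
      · exact ⟨t, le_rfl, by omega, hv, by omega⟩
      · omega

/-- Matching-pair block lemma for the reverse pass: assuming no duplicates and that no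
ordering check fails while processing positions `N` down to `s`, the insertion `ins(a)`
at position `s` is assigned to the same block as the extraction `ext(a)` at position
`t_a > s` if and only if every extraction strictly between them extracts a value `> a`. -/
theorem matching_pair_block (N U : ℕ) (hN : 0 < N) (w : ℕ → Letter)
    (halph : ∀ t, 1 ≤ t → t ≤ N → (w t).value ≤ U)
    (hdupIns : ∀ b t t', 1 ≤ t → t ≤ N → 1 ≤ t' → t' ≤ N →
      w t = .ins b → w t' = .ins b → t = t')
    (hdupExt : ∀ b t t', 1 ≤ t → t ≤ N → 1 ≤ t' → t' ≤ N →
      w t = .ext b → w t' = .ext b → t = t')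
    (a s ta : ℕ) (hs1 : 1 ≤ s) (hsta : s < ta) (htaN : ta ≤ N)
    (hws : w s = .ins a) (hwta : w ta = .ext a)
    (hcheck : ∀ t c b, s ≤ t → t < N → w t = .ext c → w (t + 1) = .ext b → b ≤ c)
    (m : ℕ → WithBot ℕ) (hm0 : m 0 = ⊥)
    (hmval : ∀ j v, 1 ≤ v → v ≤ N → isValleyB w N v = true →
      valleyCountGe w N v = j → m j = ((w v).value : WithBot ℕ))
    (k i k' : ℕ)
    (hk : k = valleyCountGe w N ta)
    (hi : i = valleyCountGe w N (s + 1))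
    (hk'le : k' ≤ i) (hk'm : m k' ≤ (a : WithBot ℕ))
    (hk'max : ∀ j, j ≤ i → m j ≤ (a : WithBot ℕ) → j ≤ k') :
    k = k' ↔ ∀ t b, s < t → t < ta → w t = .ext b → a < b := by
  -- The block of any extraction `ext(c)` at or after `s` has minimum at most `c`.
  have hmin : ∀ t c, s ≤ t → t ≤ N → w t = .ext c → m (valleyCountGe w N t) ≤ (c : WithBot ℕ) := by
    intro t c hst htN hw
    obtain ⟨v, h1, h2, h3, h4, h5⟩ := exists_run w N s hcheck _ t c rfl hst htN hw
    rw [hmval _ v (by omega) h2 h3 h4]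
    exact WithBot.coe_le_coe.2 (h5 v h1 le_rfl)
  have hkk' : k ≤ k' := by
    refine hk'max k ?_ (hk ▸ hmin ta a hsta.le htaN hwta)
    rw [hk, hi]
    exact valleyCountGe_anti w N hsta
  constructor
  · intro heq t b hst htt hw
    by_contra! hba
    have hle : valleyCountGe w N t ≤ k' := by
      refine hk'max _ ?_ ((hmin t b hst.le (by omega) hw).trans (WithBot.coe_le_coe.2 hba))
      rw [hi]
      exact valleyCountGe_anti w N hst
    obtain ⟨v, h1, h2, h3, h4, h5⟩ := exists_run w N s hcheck _ t b rfl hst.le (by omega) hw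
    -- A run ending before `ta` would contribute a valley separating `t` from `ta`.
    have hv : ta ≤ v := by
      by_contra! hlt
      have hs := valleyCountGe_succ w N v h2
      rw [if_pos h3] at hs
      have := valleyCountGe_anti w N (show v + 1 ≤ ta from hlt)
      omega
    have hab : a ≤ b := by simpa [hwta, Letter.value] using h5 ta htt.le hv
    have hbeq : b = a := le_antisymm hba hab
    have := hdupExt a t ta (by omega) (by omega) (by omega) htaN (hbeq ▸ hw) hwta
    omega
  · intro hall
    by_contra hne
    obtain ⟨v, h1, h2, h3, h4⟩ := exists_valley_of_count w N ta k' htaN (by omega) (ta - (s + 1))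
      (s + 1) (by omega) (by omega)
    rw [hmval k' v (by omega) (by omega) h3 h4] at hk'm
    have hva : (w v).value ≤ a := WithBot.coe_le_coe.1 hk'm
    cases hwv : w v with
    | ins b => simp [isValleyB, hwv, Letter.isExt] at h3
    | ext b =>
      have := hall v b h1 h2 hwv
      simp only [hwv, Letter.value] at hva
      omega
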